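/- The orbit of the root (0; 1, −1) of L = Λ⊕H under the Heisenberg group 𝕋 is exactly the set of all roots of L of the form (λ; 1, ν) with λ ∈ Λ; that is, for every root y = (λ; 1, ν) there exists T ∈ 𝕋 with T((0;1,−1)) = y. -/

import Mathlib

/- Formalization over the ring ℋ of Hurwitz integers inside the real quaternions. -/

noncomputable section
open Quaternion Finset

/-- The real quaternions ℍ. -/
abbrev Quat := Quaternion ℝ

/-- The quaternion `i`. -/
def qi : Quat := ⟨0, 1, 0, 0⟩
/-- The quaternion `j`. -/
def qj : Quat := ⟨0, 0, 1, 0⟩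
/-- The quaternion `k`. -/
def qk : Quat := ⟨0, 0, 0, 1⟩
/-- `p = 1 - i`. -/
def qp : Quat := 1 - qi

/-- A quaternion is a Hurwitz integer if it is `(a+bi+cj+dk)/2` with
`a,b,c,d` integers which are all congruent mod `2`. -/
def IsHurwitz (q : Quat) : Prop :=
  ∃ a b c d : ℤ, a % 2 = b % 2 ∧ b % 2 = c % 2 ∧ c % 2 = d % 2 ∧
    q = ⟨(a : ℝ) / 2, (b : ℝ) / 2, (c : ℝ) / 2, (d : ℝ) / 2⟩

/-- A unit of the ring ℋ of Hurwitz integers. -/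
def IsUnitH (q : Quat) : Prop :=
  IsHurwitz q ∧ ∃ r : Quat, IsHurwitz r ∧ q * r = 1 ∧ r * q = 1

/-- Membership in the (two-sided) ideal `pℋ`. -/
def InPH (q : Quat) : Prop := ∃ h : Quat, IsHurwitz h ∧ q = qp * h

/-- `ω = (−1+i+j+k)/2`. -/
def omg : Quat := ⟨-1/2, 1/2, 1/2, 1/2⟩

/-- Membership in the ideal `2ℋ`. -/
def In2H (q : Quat) : Prop := ∃ h : Quat, IsHurwitz h ∧ q = 2 * h
/-- Membership in the ideal `(2+2i)ℋ`. -/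
def In2p2iH (q : Quat) : Prop := ∃ h : Quat, IsHurwitz h ∧ q = (2 + 2 * qi) * h

/-- The quaternionic Leech lattice `Λ` (coordinates `(v∞,v₀,v₁,v₂,v₃,v₄)`). -/
def memLeech (v : Fin 6 → Quat) : Prop :=
  (∀ s, IsHurwitz (v s)) ∧
  InPH (v 3 - v 4) ∧ InPH (v 4 - v 5) ∧
  In2H ((v 2 + v 5) * star omg + (v 3 + v 4) * omg) ∧
  In2H ((v 1 + v 2) * omg + (v 3 + v 5) * star omg) ∧
  In2p2iH (-(v 0) * (qi + qj + qk) + v 1 + v 2 + v 3 + v 4 + v 5)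

/-- The ambient space of `L = Λ ⊕ H`: vectors `(λ; μ, ν)`. -/
abbrev VL : Type := (Fin 6 → Quat) × Quat × Quat

/-- The form on (the ambient space of) the Leech lattice: `⟨x,y⟩ = −(1/2) Σ x̄ₛ yₛ`. -/
def ipLeech (x y : Fin 6 → Quat) : Quat := -(2 : Quat)⁻¹ * ∑ s : Fin 6, star (x s) * y s

/-- The ℋ-valued form on `L = Λ ⊕ H`. -/
def ipLL (x y : VL) : Quat :=
  ipLeech x.1 y.1 + star x.2.1 * star qp * y.2.2 + star x.2.2 * qp * y.2.1

/-- Membership in the lattice `L = Λ ⊕ H`. -/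
def memLL (v : VL) : Prop := memLeech v.1 ∧ IsHurwitz v.2.1 ∧ IsHurwitz v.2.2

/-- Right scalar multiplication on the ambient space of `Λ ⊕ H`. -/
def rmulL (v : VL) (q : Quat) : VL := (fun s => v.1 s * q, v.2.1 * q, v.2.2 * q)

/-- The `μ`-reflection in a root `r` : `v ↦ v − r(1−μ)⟨r,v⟩/|r|²`. -/
def reflL (r : VL) (μ : Quat) (v : VL) : VL := v - rmulL r ((1 - μ) * ipLL r v / ipLL r r)

/-- Right scalar multiplication on (the ambient space of) the Leech lattice. -/
def rmulLam (lam : Fin 6 → Quat) (q : Quat) : Fin 6 → Quat := fun s => lam s * q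

/-- The translation `T_{λ,z}` :
`(m; μ, ν) ↦ (m + λμ; μ, ν − p̄⁻¹⟨λ,m⟩ + p̄⁻¹(z − ⟨λ,λ⟩/2)μ)`. -/
def Tlz (lam : Fin 6 → Quat) (z : Quat) (v : VL) : VL :=
  (v.1 + rmulLam lam v.2.1, v.2.1,
   v.2.2 - (star qp)⁻¹ * ipLeech lam v.1 + (star qp)⁻¹ * (z - ipLeech lam lam / 2) * v.2.1)

/-- The imaginary part `Im q = (q − q̄)/2` of a quaternion. -/
def Imq (q : Quat) : Quat := (q - star q) / 2

/-- The Heisenberg group `𝕋`: the group generated by the translations `T_{λ,z}`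
(for `λ ∈ Λ` and `z` purely imaginary) which map the lattice `L` to itself. -/
def Heis : Subgroup (Equiv.Perm VL) :=
  Subgroup.closure {g | ∃ lam z, memLeech lam ∧ (z : Quat).re = 0 ∧
    (∀ v, memLL v → memLL (Tlz lam z v)) ∧ ∀ v, g v = Tlz lam z v}

/-- The root `(0; 1, −1)` of `L = Λ ⊕ H`. -/
def baseRoot : VL := (0, 1, -1)

/-! ### Hurwitz integers -/

/-- The quaternion with given coordinates. -/
def mkQ (a b c d : ℝ) : Quat := ⟨a, b, c, d⟩
@[simp] theorem mkQ_re (a b c d : ℝ) : (mkQ a b c d).re = a := rfl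
@[simp] theorem mkQ_imI (a b c d : ℝ) : (mkQ a b c d).imI = b := rfl
@[simp] theorem mkQ_imJ (a b c d : ℝ) : (mkQ a b c d).imJ = c := rfl
@[simp] theorem mkQ_imK (a b c d : ℝ) : (mkQ a b c d).imK = d := rfl
@[simp] theorem qi_re : qi.re = 0 := rfl
@[simp] theorem qi_imI : qi.imI = 1 := rfl
@[simp] theorem qi_imJ : qi.imJ = 0 := rfl
@[simp] theorem qi_imK : qi.imK = 0 := rfl
@[simp] theorem omg_re : omg.re = -1 / 2 := rfl
@[simp] theorem omg_imI : omg.imI = 1 / 2 := rfl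
@[simp] theorem omg_imJ : omg.imJ = 1 / 2 := rfl
@[simp] theorem omg_imK : omg.imK = 1 / 2 := rfl
@[simp] theorem qp_re : qp.re = 1 := by simp [qp]
@[simp] theorem qp_imI : qp.imI = -1 := by simp [qp]
@[simp] theorem qp_imJ : qp.imJ = 0 := by simp [qp]
@[simp] theorem qp_imK : qp.imK = 0 := by simp [qp]
@[simp] theorem qj_re : qj.re = 0 := rfl
@[simp] theorem qj_imI : qj.imI = 0 := rfl
@[simp] theorem qj_imJ : qj.imJ = 1 := rfl
@[simp] theorem qj_imK : qj.imK = 0 := rfl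
@[simp] theorem qk_re : qk.re = 0 := rfl
@[simp] theorem qk_imI : qk.imI = 0 := rfl
@[simp] theorem qk_imJ : qk.imJ = 0 := rfl
@[simp] theorem qk_imK : qk.imK = 1 := rfl
@[simp] theorem three_re : (3 : Quat).re = 3 := rfl
@[simp] theorem three_imI : (3 : Quat).imI = 0 := rfl
@[simp] theorem three_imJ : (3 : Quat).imJ = 0 := rfl
@[simp] theorem three_imK : (3 : Quat).imK = 0 := rfl
@[simp] theorem two_re : (2 : Quat).re = 2 := rfl
@[simp] theorem two_imI : (2 : Quat).imI = 0 := rfl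
@[simp] theorem two_imJ : (2 : Quat).imJ = 0 := rfl
@[simp] theorem two_imK : (2 : Quat).imK = 0 := rfl

theorem hur_mk (a b c d : ℤ) (q : Quat) (h1 : a % 2 = b % 2) (h2 : b % 2 = c % 2)
    (h3 : c % 2 = d % 2) (e1 : q.re = a / 2) (e2 : q.imI = b / 2) (e3 : q.imJ = c / 2)
    (e4 : q.imK = d / 2) : IsHurwitz q :=
  ⟨a, b, c, d, h1, h2, h3, QuaternionAlgebra.ext e1 e2 e3 e4⟩

theorem hur_dest {q : Quat} (h : IsHurwitz q) : ∃ a b c d : ℤ, a % 2 = b % 2 ∧ b % 2 = c % 2 ∧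
    c % 2 = d % 2 ∧ q = mkQ (a / 2) (b / 2) (c / 2) (d / 2) := h

theorem hur_add {x y : Quat} (hx : IsHurwitz x) (hy : IsHurwitz y) : IsHurwitz (x + y) := by
  obtain ⟨a, b, c, d, h1, h2, h3, rfl⟩ := hur_dest hx
  obtain ⟨a', b', c', d', h1', h2', h3', rfl⟩ := hur_dest hy
  refine hur_mk (a + a') (b + b') (c + c') (d + d') _ (by omega) (by omega) (by omega)
    ?_ ?_ ?_ ?_ <;> simp <;> try ring

theorem hur_neg {x : Quat} (hx : IsHurwitz x) : IsHurwitz (-x) := by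
  obtain ⟨a, b, c, d, h1, h2, h3, rfl⟩ := hur_dest hx
  refine hur_mk (-a) (-b) (-c) (-d) _ (by omega) (by omega) (by omega)
    ?_ ?_ ?_ ?_ <;> simp <;> try ring

theorem hur_star {x : Quat} (hx : IsHurwitz x) : IsHurwitz (star x) := by
  obtain ⟨a, b, c, d, h1, h2, h3, rfl⟩ := hur_dest hx
  refine hur_mk a (-b) (-c) (-d) _ (by omega) (by omega) (by omega)
    ?_ ?_ ?_ ?_ <;> simp <;> try ring

theorem hur_sub {x y : Quat} (hx : IsHurwitz x) (hy : IsHurwitz y) : IsHurwitz (x - y) := by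
  rw [sub_eq_add_neg]; exact hur_add hx (hur_neg hy)

/-- Coordinates of a Hurwitz integer in a `ℤ`-basis. -/
theorem hur_coords {x : Quat} (hx : IsHurwitz x) : ∃ a b c w : ℤ,
    x = mkQ (a + w / 2) (b + w / 2) (c + w / 2) (w / 2) := by
  obtain ⟨a, b, c, d, h1, h2, h3, rfl⟩ := hur_dest hx
  obtain ⟨a1, rfl⟩ : ∃ t, a = 2 * t + d := ⟨(a - d) / 2, by omega⟩
  obtain ⟨b1, rfl⟩ : ∃ t, b = 2 * t + d := ⟨(b - d) / 2, by omega⟩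
  obtain ⟨c1, rfl⟩ : ∃ t, c = 2 * t + d := ⟨(c - d) / 2, by omega⟩
  refine ⟨a1, b1, c1, d, ?_⟩
  ext <;> simp <;> try ring

theorem hur_of_coords {x : Quat} (a b c w : ℤ)
    (e1 : x.re = a + w / 2) (e2 : x.imI = b + w / 2) (e3 : x.imJ = c + w / 2)
    (e4 : x.imK = w / 2) : IsHurwitz x := by
  refine hur_mk (2 * a + w) (2 * b + w) (2 * c + w) w _ (by omega) (by omega) (by omega)
    ?_ ?_ ?_ ?_ <;> simp [*] <;> ring

theorem hur_mul {x y : Quat} (hx : IsHurwitz x) (hy : IsHurwitz y) : IsHurwitz (x * y) := by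
  obtain ⟨a, b, c, w, rfl⟩ := hur_coords hx
  obtain ⟨a', b', c', w', rfl⟩ := hur_coords hy
  refine hur_of_coords
    (a * a' - b * b' - c * c' - b * w' - w * c' - w * w' - b * c' + c * b')
    (a * b' + b * a' + c * w' - w * c' - b * c' + c * b' + w * b')
    (a * c' + c * a' - b * w' + w * b' + c * b' - b * c' + c * w')
    (a * w' + w * a' + w * w' + 2 * (b * c') + b * w' + w * c' - 2 * (c * b') - c * w' - w * b')
    ?_ ?_ ?_ ?_ <;> simp <;> try ring

theorem hur_int (n : ℤ) : IsHurwitz (n : Quat) := by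
  refine hur_of_coords n 0 0 0 ?_ ?_ ?_ ?_ <;> simp

theorem hur_zero : IsHurwitz 0 := by simpa using hur_int 0
theorem hur_one : IsHurwitz 1 := by simpa using hur_int 1
theorem hur_two : IsHurwitz 2 := by simpa using hur_int 2
theorem hur_qi : IsHurwitz qi := by
  refine hur_of_coords 0 1 0 0 ?_ ?_ ?_ ?_ <;> simp [qi]
theorem hur_omg : IsHurwitz omg := by
  refine hur_of_coords (-1) 0 0 1 ?_ ?_ ?_ ?_ <;> norm_num [omg]
theorem hur_qp : IsHurwitz qp := hur_sub hur_one hur_qi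

theorem hur_sum {ι : Type*} (s : Finset ι) (f : ι → Quat) (h : ∀ i ∈ s, IsHurwitz (f i)) :
    IsHurwitz (∑ i ∈ s, f i) :=
  Finset.sum_induction f IsHurwitz (fun _ _ => hur_add) hur_zero h

/-! ### The ideal `pℋ` -/

theorem hur_comm_qp {h : Quat} (hh : IsHurwitz h) : ∃ g, IsHurwitz g ∧ h * qp = qp * g := by
  obtain ⟨a, b, c, d, h1, h2, h3, rfl⟩ := hur_dest hh
  refine ⟨mkQ (a / 2) (b / 2) (-(d / 2)) (c / 2),
    hur_mk a b (-d) c _ h1 (by omega) (by omega) ?_ ?_ ?_ ?_, ?_⟩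
  any_goals (first | (simp; done) | (simp; ring))
  ext <;> simp <;> try ring

theorem hur_comm_qp2 {h : Quat} (hh : IsHurwitz h) : ∃ g, IsHurwitz g ∧ qp * h = g * qp := by
  obtain ⟨a, b, c, d, h1, h2, h3, rfl⟩ := hur_dest hh
  refine ⟨mkQ (a / 2) (b / 2) (d / 2) (-(c / 2)),
    hur_mk a b d (-c) _ h1 (by omega) (by omega) ?_ ?_ ?_ ?_, ?_⟩
  any_goals (first | (simp; done) | (simp; ring))
  ext <;> simp <;> try ring

theorem ph_add {x y : Quat} (hx : InPH x) (hy : InPH y) : InPH (x + y) := by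
  obtain ⟨a, ha, rfl⟩ := hx
  obtain ⟨b, hb, rfl⟩ := hy
  exact ⟨a + b, hur_add ha hb, by rw [mul_add]⟩

theorem ph_neg {x : Quat} (hx : InPH x) : InPH (-x) := by
  obtain ⟨a, ha, rfl⟩ := hx
  exact ⟨-a, hur_neg ha, by rw [mul_neg]⟩

theorem ph_sub {x y : Quat} (hx : InPH x) (hy : InPH y) : InPH (x - y) := by
  rw [sub_eq_add_neg]; exact ph_add hx (ph_neg hy)

theorem ph_zero : InPH 0 := ⟨0, hur_zero, by simp⟩

theorem ph_hur {x : Quat} (hx : InPH x) : IsHurwitz x := by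
  obtain ⟨a, ha, rfl⟩ := hx
  exact hur_mul hur_qp ha

theorem ph_mul {x y : Quat} (hx : InPH x) (hy : IsHurwitz y) : InPH (x * y) := by
  obtain ⟨a, ha, rfl⟩ := hx
  exact ⟨a * y, hur_mul ha hy, by rw [mul_assoc]⟩

theorem mul_ph {x y : Quat} (hx : IsHurwitz x) (hy : InPH y) : InPH (x * y) := by
  obtain ⟨a, ha, rfl⟩ := hy
  obtain ⟨g, hg, e⟩ := hur_comm_qp hx
  exact ⟨g * a, hur_mul hg ha, by rw [← mul_assoc, e, mul_assoc]⟩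

theorem ph_sum {ι : Type*} (s : Finset ι) (f : ι → Quat) (h : ∀ i ∈ s, InPH (f i)) :
    InPH (∑ i ∈ s, f i) :=
  Finset.sum_induction f InPH (fun _ _ => ph_add) ph_zero h

theorem star_qp_eq : star qp = qp * qi := by
  ext <;> simp 

theorem ph_star {x : Quat} (hx : InPH x) : InPH (star x) := by
  obtain ⟨a, ha, rfl⟩ := hx
  rw [star_mul, star_qp_eq]
  exact mul_ph (hur_star ha) (ph_mul ⟨1, hur_one, by simp⟩ hur_qi)

theorem ph_two : InPH 2 :=
  ⟨1 + qi, hur_add hur_one hur_qi, by ext <;> simp <;> try norm_num⟩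

/-- Products of two elements of `pℋ` lie in `2ℋ`. -/
theorem ph_mul_ph {x y : Quat} (hx : InPH x) (hy : InPH y) : In2H (x * y) := by
  obtain ⟨a, ha, rfl⟩ := hx
  obtain ⟨b, hb, rfl⟩ := hy
  obtain ⟨g, hg, e⟩ := hur_comm_qp ha
  refine ⟨-qi * (g * b), hur_mul (hur_neg hur_qi) (hur_mul hg hb), ?_⟩
  have : qp * qp = 2 * -qi := by ext <;> simp <;> try norm_num
  calc qp * a * (qp * b) = qp * (a * qp) * b := by noncomm_ring
    _ = qp * qp * (g * b) := by rw [e]; noncomm_ring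
    _ = _ := by rw [this]; noncomm_ring

theorem h2_add {x y : Quat} (hx : In2H x) (hy : In2H y) : In2H (x + y) := by
  obtain ⟨a, ha, rfl⟩ := hx
  obtain ⟨b, hb, rfl⟩ := hy
  exact ⟨a + b, hur_add ha hb, by rw [mul_add]⟩

theorem h2_neg {x : Quat} (hx : In2H x) : In2H (-x) := by
  obtain ⟨a, ha, rfl⟩ := hx
  exact ⟨-a, hur_neg ha, by rw [mul_neg]⟩

theorem h2_sub {x y : Quat} (hx : In2H x) (hy : In2H y) : In2H (x - y) := by
  rw [sub_eq_add_neg]; exact h2_add hx (h2_neg hy)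

theorem h2_mul {x y : Quat} (hx : In2H x) (hy : IsHurwitz y) : In2H (x * y) := by
  obtain ⟨a, ha, rfl⟩ := hx
  exact ⟨a * y, hur_mul ha hy, by rw [mul_assoc]⟩

theorem h2_ph {x : Quat} (hx : In2H x) : InPH x := by
  obtain ⟨a, ha, rfl⟩ := hx
  exact ph_mul ph_two ha

/-- `ℋ/pℋ` is commutative; here for commutators with `ω`. -/
theorem comm_omg {h : Quat} (hh : IsHurwitz h) : InPH (h * omg - omg * h) := by
  obtain ⟨a, b, c, w, rfl⟩ := hur_coords hh
  refine ⟨mkQ (-(c / 2)) (c / 2) (c / 2 - b) (-(c / 2)), ?_, ?_⟩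
  · refine hur_mk (-c) c (c - 2 * b) (-c) _ (by omega) (by omega) (by omega) ?_ ?_ ?_ ?_ <;>
      simp <;> try ring
  · ext <;> simp <;> try ring

theorem two_comm (x : Quat) : x * 2 = 2 * x := by rw [mul_two, two_mul]

theorem star_omg_eq : star omg = -1 - omg := by
  ext <;> simp <;> norm_num

theorem hur_star_omg : IsHurwitz (star omg) := hur_star hur_omg

theorem comm_star_omg {h : Quat} (hh : IsHurwitz h) :
    InPH (h * star omg - star omg * h) := by
  have : h * star omg - star omg * h = -(h * omg - omg * h) := by
    rw [star_omg_eq]; noncomm_ring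
  rw [this]; exact ph_neg (comm_omg hh)

/-- `θ = i + j + k`. -/
def tht : Quat := qi + qj + qk

theorem tht_eq : tht = 1 + 2 * omg := by
  ext <;> simp [tht] <;> norm_num

theorem tht_sq : tht * tht = -3 := by
  ext <;> simp [tht] <;> norm_num

theorem star_omg_mul : star omg * omg = 1 := by ext <;> simp <;> norm_num
theorem omg_mul_star : omg * star omg = 1 := by ext <;> simp <;> norm_num
theorem omg_sq : omg * omg = star omg := by ext <;> simp <;> norm_num
theorem star_omg_sq : star omg * star omg = omg := by ext <;> simp <;> norm_num

theorem hur_tht : IsHurwitz tht := by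
  rw [tht_eq]; exact hur_add hur_one (hur_mul hur_two hur_omg)

/-! ### The ideal `2pℋ` -/

/-- Membership in `2pℋ`, in a convenient form. -/
def In2P (q : Quat) : Prop := ∃ x, InPH x ∧ q = 2 * x

theorem in2p_iff (q : Quat) : In2p2iH q ↔ In2P q := by
  have e : (2 + 2 * qi : Quat) = 2 * (qp * qi) := by ext <;> simp
  have hii : qi * -qi = 1 := by ext <;> simp
  constructor
  · rintro ⟨h, hh, rfl⟩
    exact ⟨qp * (qi * h), ⟨_, hur_mul hur_qi hh, rfl⟩, by rw [e]; noncomm_ring⟩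
  · rintro ⟨x, ⟨h, hh, rfl⟩, rfl⟩
    refine ⟨-qi * h, hur_mul (hur_neg hur_qi) hh, ?_⟩
    calc 2 * (qp * h) = 2 * (qp * ((qi * -qi) * h)) := by rw [hii, one_mul]
      _ = _ := by rw [e]; noncomm_ring

theorem p2_add {x y : Quat} (hx : In2P x) (hy : In2P y) : In2P (x + y) := by
  obtain ⟨a, ha, rfl⟩ := hx
  obtain ⟨b, hb, rfl⟩ := hy
  exact ⟨a + b, ph_add ha hb, by rw [mul_add]⟩

theorem p2_zero : In2P 0 := ⟨0, ph_zero, by simp⟩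

theorem p2_mul {x y : Quat} (hx : In2P x) (hy : IsHurwitz y) : In2P (x * y) := by
  obtain ⟨a, ha, rfl⟩ := hx
  exact ⟨a * y, ph_mul ha hy, by rw [mul_assoc]⟩

theorem mul_p2 {x y : Quat} (hx : IsHurwitz x) (hy : In2P y) : In2P (x * y) := by
  obtain ⟨a, ha, rfl⟩ := hy
  exact ⟨x * a, mul_ph hx ha, by rw [← mul_assoc, two_comm, mul_assoc]⟩

theorem p2_sum {ι : Type*} (s : Finset ι) (f : ι → Quat) (h : ∀ i ∈ s, In2P (f i)) :
    In2P (∑ i ∈ s, f i) :=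
  Finset.sum_induction f In2P (fun _ _ => p2_add) p2_zero h

theorem comm_tht {h : Quat} (hh : IsHurwitz h) : In2P (h * tht - tht * h) := by
  refine ⟨_, comm_omg hh, ?_⟩
  rw [tht_eq]
  have := two_comm h
  calc h * (1 + 2 * omg) - (1 + 2 * omg) * h = h * 2 * omg - 2 * (omg * h) := by noncomm_ring
    _ = _ := by rw [this]; noncomm_ring

/-! ### `Λ` is a right module -/

theorem leech_add {v w : Fin 6 → Quat} (hv : memLeech v) (hw : memLeech w) :
    memLeech (v + w) := by
  obtain ⟨a0, a1, a2, a3, a4, a5⟩ := hv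
  obtain ⟨b0, b1, b2, b3, b4, b5⟩ := hw
  refine ⟨fun s => hur_add (a0 s) (b0 s), ?_, ?_, ?_, ?_, ?_⟩
  · convert ph_add a1 b1 using 1; simp only [Pi.add_apply]; abel
  · convert ph_add a2 b2 using 1; simp only [Pi.add_apply]; abel
  · convert h2_add a3 b3 using 1; simp only [Pi.add_apply]; noncomm_ring
  · convert h2_add a4 b4 using 1; simp only [Pi.add_apply]; noncomm_ring
  · rw [in2p_iff] at *
    convert p2_add a5 b5 using 1; simp only [Pi.add_apply]; noncomm_ring

theorem ph_add_of_sub {x y : Quat} (hy : IsHurwitz y) (h : InPH (x - y)) : InPH (x + y) := by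
  have := ph_add h (ph_mul ph_two hy)
  convert this using 1; noncomm_ring

/-- Auxiliary: solving the second/third Leech congruences. -/
theorem solve_a {a b : Quat} (h : In2H (a * star omg + b * omg)) :
    In2H (a + b * star omg) := by
  convert h2_mul h hur_omg using 1
  rw [add_mul, mul_assoc, mul_assoc, star_omg_mul, omg_sq, mul_one]

theorem solve_b {a b : Quat} (h : In2H (a * omg + b * star omg)) :
    In2H (a + b * omg) := by
  convert h2_mul h hur_star_omg using 1
  rw [add_mul, mul_assoc, mul_assoc, omg_mul_star, star_omg_sq, mul_one]

theorem ph_of_h2 {a b : Quat} (hb : InPH b) (h : In2H (a + b)) : InPH a := by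
  convert ph_sub (h2_ph h) hb using 1; abel

theorem leech_rmul {v : Fin 6 → Quat} (hv : memLeech v) {q : Quat} (hq : IsHurwitz q) :
    memLeech (rmulLam v q) := by
  obtain ⟨a0, a1, a2, a3, a4, a5⟩ := hv
  have p34 : InPH (v 3 + v 4) := ph_add_of_sub (a0 4) a1
  have p35 : InPH (v 3 + v 5) := ph_add_of_sub (a0 5) (by
    convert ph_add a1 a2 using 1; abel)
  have p25 : InPH (v 2 + v 5) := ph_of_h2 (ph_mul p34 hur_star_omg) (solve_a a3)
  have p12 : InPH (v 1 + v 2) := ph_of_h2 (ph_mul p35 hur_omg) (solve_b a4)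
  refine ⟨fun s => hur_mul (a0 s) hq, ?_, ?_, ?_, ?_, ?_⟩
  · convert ph_mul a1 hq using 1; simp only [rmulLam]; noncomm_ring
  · convert ph_mul a2 hq using 1; simp only [rmulLam]; noncomm_ring
  · convert h2_add (h2_mul a3 hq) (h2_add (ph_mul_ph p25 (comm_star_omg hq))
      (ph_mul_ph p34 (comm_omg hq))) using 1
    simp only [rmulLam]; noncomm_ring
  · convert h2_add (h2_mul a4 hq) (h2_add (ph_mul_ph p12 (comm_omg hq))
      (ph_mul_ph p35 (comm_star_omg hq))) using 1
    simp only [rmulLam]; noncomm_ring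
  · rw [in2p_iff] at *
    convert p2_add (p2_mul a5 hq) (mul_p2 (hur_neg (a0 0)) (comm_tht hq)) using 1
    simp only [rmulLam, tht]; noncomm_ring

/-! ### Generators -/

/-- Real coordinates of the right generators: `(gen s i)` is coordinate `s` of generator `i`. -/
def gen : Fin 6 → Fin 6 → Fin 4 → ℤ :=
  ![![![0, 3, 3, 3], ![1, 1, 0, 2], ![3, 2, -1, 2], ![0, 2, 2, 2], ![0, 2, 2, 2], ![2, -2, 0, 0]],
    ![![1, 0, 0, 0], ![-1, 0, -1, 0], ![-1, -1, -2, 0], 0, ![2, 0, 0, 0], 0],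
    ![![-1, 0, 0, 0], ![1, 0, 1, 0], ![1, 0, 1, 0], ![2, 0, 0, 0], 0, 0],
    ![![1, 0, 0, 0], 0, ![1, -1, 0, 0], 0, 0, 0],
    ![![1, 0, 0, 0], ![1, -1, 0, 0], 0, 0, 0, 0],
    ![![1, 0, 0, 0], 0, 0, 0, 0, 0]]

/-- An integral quaternion. -/
def zQ (f : Fin 4 → ℤ) : Quat := mkQ (f 0) (f 1) (f 2) (f 3)

/-- Integral model of `x̄ y`. -/
def zmul (x y : Fin 4 → ℤ) : Fin 4 → ℤ :=
  ![x 0 * y 0 + x 1 * y 1 + x 2 * y 2 + x 3 * y 3,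
    x 0 * y 1 - x 1 * y 0 - x 2 * y 3 + x 3 * y 2,
    x 0 * y 2 + x 1 * y 3 - x 2 * y 0 - x 3 * y 1,
    x 0 * y 3 - x 1 * y 2 + x 2 * y 1 - x 3 * y 0]

theorem zQ_mul (x y : Fin 4 → ℤ) : star (zQ x) * zQ y = zQ (zmul x y) := by
  ext <;> simp [zQ, zmul] <;> ring

theorem zQ_add (x y : Fin 4 → ℤ) : zQ x + zQ y = zQ (x + y) := by
  ext <;> simp [zQ]

/-- Gram matrix of the generators over the integers. -/
def gramZ (i j : Fin 6) : Fin 4 → ℤ :=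
  zmul (gen 0 i) (gen 0 j) + zmul (gen 1 i) (gen 1 j) + zmul (gen 2 i) (gen 2 j) +
    zmul (gen 3 i) (gen 3 j) + zmul (gen 4 i) (gen 4 j) + zmul (gen 5 i) (gen 5 j)

set_option maxRecDepth 10000 in
theorem gramZ_dvd : ∀ i j : Fin 6, gramZ i j 0 % 2 = 0 ∧ gramZ i j 1 % 2 = 0 ∧
    gramZ i j 2 % 2 = 0 ∧ gramZ i j 3 % 2 = 0 ∧
    (gramZ i j 0 + gramZ i j 1 + gramZ i j 2 + gramZ i j 3) % 4 = 0 := by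
  decide

theorem zQ_in2P (f : Fin 4 → ℤ) (h0 : f 0 % 2 = 0) (h1 : f 1 % 2 = 0) (h2 : f 2 % 2 = 0)
    (h3 : f 3 % 2 = 0) (h : (f 0 + f 1 + f 2 + f 3) % 4 = 0) : In2P (zQ f) := by
  obtain ⟨a, ha⟩ : ∃ a, f 0 = 2 * a := ⟨f 0 / 2, by omega⟩
  obtain ⟨b, hb⟩ : ∃ a, f 1 = 2 * a := ⟨f 1 / 2, by omega⟩
  obtain ⟨c, hc⟩ : ∃ a, f 2 = 2 * a := ⟨f 2 / 2, by omega⟩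
  obtain ⟨d, hd⟩ : ∃ a, f 3 = 2 * a := ⟨f 3 / 2, by omega⟩
  refine ⟨qp * mkQ ((a - b) / 2) ((a + b) / 2) ((c - d) / 2) ((c + d) / 2), ⟨_, ?_, rfl⟩, ?_⟩
  · refine hur_mk (a - b) (a + b) (c - d) (c + d) _ (by omega) (by omega) (by omega)
      ?_ ?_ ?_ ?_ <;> simp
  · ext <;> simp [zQ, ha, hb, hc, hd] <;> ring

theorem gram_in2P (i j : Fin 6) : In2P (∑ s, star (zQ (gen s i)) * zQ (gen s j)) := by
  obtain ⟨h0, h1, h2, h3, h4⟩ := gramZ_dvd i j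
  simp only [zQ_mul, Fin.sum_univ_six, zQ_add]
  exact zQ_in2P _ h0 h1 h2 h3 h4

theorem leech_param {v : Fin 6 → Quat} (hv : memLeech v) :
    ∃ c : Fin 6 → Quat, (∀ i, IsHurwitz (c i)) ∧ ∀ s, v s = ∑ i, zQ (gen s i) * c i := by
  obtain ⟨a0, a1, a2, a3, a4, a5⟩ := hv
  set c := v 5 with hc
  have hcH : IsHurwitz c := a0 5
  obtain ⟨a, ha, e4⟩ := a2
  have p35 : InPH (v 3 - c) := by convert ph_add a1 ⟨a, ha, e4⟩ using 1; abel
  obtain ⟨b, hb, e3⟩ := p35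
  have E4 : v 4 = c + qp * a := by rw [← e4]; abel
  have E3 : v 3 = c + qp * b := by rw [← e3]; abel
  -- the coordinate v 2
  have k2 : In2H (v 2 + c + qp * star omg * (a + b)) := by
    have t1 := solve_a a3
    have t2 : In2H (qp * ((a + b) * star omg - star omg * (a + b))) :=
      ph_mul_ph ⟨1, hur_one, by simp⟩ (comm_star_omg (hur_add ha hb))
    have t3 : In2H (2 * (c * star omg)) := ⟨_, hur_mul hcH hur_star_omg, rfl⟩
    convert h2_sub (h2_sub t1 t2) t3 using 1
    rw [E3, E4]; noncomm_ring
  obtain ⟨d, hd, e2⟩ := k2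
  have E2 : v 2 = -c - qp * star omg * (a + b) + 2 * d := by rw [← e2]; abel
  have k1 : In2H (v 1 + v 2 + qp * omg * b) := by
    have t1 := solve_b a4
    have t2 : In2H (qp * (b * omg - omg * b)) :=
      ph_mul_ph ⟨1, hur_one, by simp⟩ (comm_omg hb)
    have t3 : In2H (2 * (c * omg)) := ⟨_, hur_mul hcH hur_omg, rfl⟩
    convert h2_sub (h2_sub t1 t2) t3 using 1
    rw [E3]; noncomm_ring
  obtain ⟨e', he', e1⟩ := k1
  obtain ⟨e, he, ee⟩ : ∃ e, IsHurwitz e ∧ e' = e + d := ⟨e' - d, hur_sub he' hd, by abel⟩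
  have E1 : v 1 = c + qp * star omg * (a + b) - qp * omg * b + 2 * e := by
    have : v 1 = 2 * e' - v 2 - qp * omg * b := by rw [← e1]; abel
    rw [this, ee, E2]; noncomm_ring
  have k0 : In2P (v 0 - tht * (v 1 + v 2 + v 3 + v 4 + c)) := by
    rw [in2p_iff] at a5
    have hS : IsHurwitz (v 1 + v 2 + v 3 + v 4 + c) :=
      hur_add (hur_add (hur_add (hur_add (a0 1) (a0 2)) (a0 3)) (a0 4)) hcH
    have t1 := p2_mul a5 (hur_neg hur_tht)
    have t2 := comm_tht hS
    have t3 : In2P (4 * v 0) := ⟨2 * v 0, ph_mul ph_two (a0 0), by noncomm_ring⟩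
    convert p2_add (p2_add t1 t2) t3 using 1
    have : v 0 * tht * tht = -3 * v 0 := by
      rw [mul_assoc, tht_sq]; noncomm_ring
    have h4 : v 0 = v 0 * tht * tht + 4 * v 0 := by rw [this]; noncomm_ring
    change _ = (-v 0 * tht + v 1 + v 2 + v 3 + v 4 + c) * -tht + _ + _
    conv_lhs => rw [h4]
    noncomm_ring
  obtain ⟨_, ⟨f, hf, rfl⟩, e0⟩ := k0
  have E0 : v 0 = tht * (v 1 + v 2 + v 3 + v 4 + c) + 2 * (qp * f) := by rw [← e0]; abel
  have E0' : v 0 = (3 * tht) * c + (tht * qp) * a + (tht * qp - tht * qp * omg) * b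
      + (2 * tht) * d + (2 * tht) * e + (2 * qp) * f := by
    rw [E0, E1, E2, E3, E4]; noncomm_ring
  have zz : zQ 0 = 0 := by ext <;> simp [zQ]
  have z1 : zQ ![1, 0, 0, 0] = 1 := by ext <;> simp [zQ]
  have zm1 : zQ ![-1, 0, 0, 0] = -1 := by ext <;> simp [zQ]
  have z2 : zQ ![2, 0, 0, 0] = 2 := by ext <;> simp [zQ]
  have zp : zQ ![1, -1, 0, 0] = qp := by ext <;> simp [zQ]
  have z2p : zQ ![2, -2, 0, 0] = 2 * qp := by ext <;> simp [zQ]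
  have z2t : zQ ![0, 2, 2, 2] = 2 * tht := by ext <;> simp [zQ, tht]
  have z3t : zQ ![0, 3, 3, 3] = 3 * tht := by
    have : (3 : Quat) = 2 + 1 := by norm_num
    rw [this]; ext <;> simp [zQ, tht] <;> norm_num
  have ztp : zQ ![1, 1, 0, 2] = tht * qp := by
    ext <;> simp [zQ, tht] <;> norm_num
  have ztq : zQ ![3, 2, -1, 2] = tht * qp - tht * qp * omg := by
    ext <;> simp [zQ, tht] <;> norm_num
  have zo : zQ ![1, 0, 1, 0] = -(qp * star omg) := by
    ext <;> simp [zQ] <;> norm_num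
  have zo' : zQ ![-1, 0, -1, 0] = qp * star omg := by
    ext <;> simp [zQ] <;> norm_num
  have zoo : zQ ![-1, -1, -2, 0] = qp * star omg - qp * omg := by
    ext <;> simp [zQ] <;> norm_num
  refine ⟨![c, a, b, d, e, f], ?_, ?_⟩
  · intro i; fin_cases i <;> assumption
  · intro s
    have g (s : Fin 6) : (∑ i, zQ (gen s i) * (![c, a, b, d, e, f] : Fin 6 → Quat) i) =
        zQ (gen s 0) * c + zQ (gen s 1) * a + zQ (gen s 2) * b + zQ (gen s 3) * d +
        zQ (gen s 4) * e + zQ (gen s 5) * f := by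
      rw [Fin.sum_univ_six]; rfl
    rw [g]
    fin_cases s
    · change v 0 = zQ ![0, 3, 3, 3] * c + zQ ![1, 1, 0, 2] * a + zQ ![3, 2, -1, 2] * b +
        zQ ![0, 2, 2, 2] * d + zQ ![0, 2, 2, 2] * e + zQ ![2, -2, 0, 0] * f
      rw [z3t, ztp, ztq, z2t, z2p, E0']
    · change v 1 = zQ ![1, 0, 0, 0] * c + zQ ![-1, 0, -1, 0] * a + zQ ![-1, -1, -2, 0] * b +
        zQ 0 * d + zQ ![2, 0, 0, 0] * e + zQ 0 * f
      rw [z1, zo', zoo, zz, z2, E1]; noncomm_ring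
    · change v 2 = zQ ![-1, 0, 0, 0] * c + zQ ![1, 0, 1, 0] * a + zQ ![1, 0, 1, 0] * b +
        zQ ![2, 0, 0, 0] * d + zQ 0 * e + zQ 0 * f
      rw [zm1, zo, zz, z2, E2]; noncomm_ring
    · change v 3 = zQ ![1, 0, 0, 0] * c + zQ 0 * a + zQ ![1, -1, 0, 0] * b +
        zQ 0 * d + zQ 0 * e + zQ 0 * f
      rw [z1, zz, zp, E3]; noncomm_ring
    · change v 4 = zQ ![1, 0, 0, 0] * c + zQ ![1, -1, 0, 0] * a + zQ 0 * b +
        zQ 0 * d + zQ 0 * e + zQ 0 * f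
      rw [z1, zz, zp, E4]; noncomm_ring
    · change v 5 = zQ ![1, 0, 0, 0] * c + zQ 0 * a + zQ 0 * b +
        zQ 0 * d + zQ 0 * e + zQ 0 * f
      rw [z1, zz, hc]; noncomm_ring

theorem leech_sum_in2P {x y : Fin 6 → Quat} (hx : memLeech x) (hy : memLeech y) :
    In2P (∑ s, star (x s) * y s) := by
  obtain ⟨c, hc, ex⟩ := leech_param hx
  obtain ⟨d, hd, ey⟩ := leech_param hy
  have : ∑ s, star (x s) * y s =
      ∑ i, ∑ j, star (c i) * (∑ s, star (zQ (gen s i)) * zQ (gen s j)) * d j := by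
    simp only [ex, ey, star_sum, star_mul, Finset.sum_mul, Finset.mul_sum]
    rw [Finset.sum_comm]
    refine (Finset.sum_congr rfl fun j _ => Finset.sum_comm).trans ?_
    rw [Finset.sum_comm]
    refine Finset.sum_congr rfl fun i _ => Finset.sum_congr rfl fun j _ =>
      Finset.sum_congr rfl fun s _ => ?_
    noncomm_ring
  rw [this]
  exact p2_sum _ _ fun i _ => p2_sum _ _ fun j _ =>
    p2_mul (mul_p2 (hur_star (hc i)) (gram_in2P i j)) (hd j)

theorem quat_two_ne : (2 : Quat) ≠ 0 := by
  intro h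
  have := congrArg (fun q : Quat => q.re) h
  simp at this

theorem leech_ip {x y : Fin 6 → Quat} (hx : memLeech x) (hy : memLeech y) :
    InPH (ipLeech x y) := by
  obtain ⟨a, ha, e⟩ := leech_sum_in2P hx hy
  have : ipLeech x y = -a := by
    rw [ipLeech, e, neg_mul, ← mul_assoc, inv_mul_cancel₀ quat_two_ne, one_mul]
  rw [this]; exact ph_neg ha

/-! ### The translations -/

theorem star_ipLeech (x y : Fin 6 → Quat) : star (ipLeech x y) = ipLeech y x := by
  have h : (2 : Quat)⁻¹ = ((2⁻¹ : ℝ) : Quat) := by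
    rw [Quaternion.coe_inv]; rfl
  simp only [ipLeech, h, star_mul, star_sum, star_neg, star_star, Quaternion.star_coe]
  rw [neg_mul, mul_neg, Quaternion.coe_commutes]

theorem ipLeech_add_left (x y w : Fin 6 → Quat) :
    ipLeech (x + y) w = ipLeech x w + ipLeech y w := by
  simp only [ipLeech, Pi.add_apply, star_add, add_mul, Finset.sum_add_distrib, mul_add]

theorem ipLeech_add_right (x y w : Fin 6 → Quat) :
    ipLeech w (x + y) = ipLeech w x + ipLeech w y := by
  simp only [ipLeech, Pi.add_apply, Finset.sum_add_distrib, mul_add]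

theorem ipLeech_rmul (x y : Fin 6 → Quat) (q : Quat) :
    ipLeech x (rmulLam y q) = ipLeech x y * q := by
  simp only [ipLeech, rmulLam, mul_assoc, Finset.sum_mul]

theorem ipLeech_neg_left (x y : Fin 6 → Quat) : ipLeech (-x) y = -ipLeech x y := by
  simp [ipLeech]

theorem ipLeech_neg_right (x y : Fin 6 → Quat) : ipLeech x (-y) = -ipLeech x y := by
  simp [ipLeech]

theorem star_half (x : Quat) : star (x / 2) = star x / 2 := by
  have h : (2 : Quat)⁻¹ = ((2⁻¹ : ℝ) : Quat) := by
    rw [Quaternion.coe_inv]; rfl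
  rw [div_eq_mul_inv, div_eq_mul_inv, h, star_mul, Quaternion.star_coe, Quaternion.coe_commutes]

theorem half_add_half (x : Quat) : x / 2 + x / 2 = x := by
  rw [← mul_two, div_mul_cancel₀ _ quat_two_ne]

theorem star_qp_ne : star qp ≠ 0 := by
  intro h
  have := congrArg (fun q : Quat => q.re) h
  simp at this

theorem hur_of_ph {x : Quat} (hx : InPH x) : IsHurwitz ((star qp)⁻¹ * x) := by
  obtain ⟨h, hh, rfl⟩ := hx
  have : qp * h = star qp * (-qi * h) := by
    rw [← mul_assoc]; congr 1; ext <;> simp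
  rw [this, ← mul_assoc, inv_mul_cancel₀ star_qp_ne, one_mul]
  exact hur_mul (hur_neg hur_qi) hh

theorem star_im {z : Quat} (hz : z.re = 0) : star z = -z := by
  ext <;> simp [hz]

theorem leech_neg {v : Fin 6 → Quat} (hv : memLeech v) : memLeech (-v) := by
  convert leech_rmul hv (hur_neg hur_one) using 1
  ext1 s; simp [rmulLam]

theorem Tlz_mem {lam : Fin 6 → Quat} (hl : memLeech lam) {z : Quat}
    (hz : InPH (z - ipLeech lam lam / 2)) (v : VL) (hv : memLL v) : memLL (Tlz lam z v) := by
  obtain ⟨h1, h2, h3⟩ := hv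
  exact ⟨leech_add h1 (leech_rmul hl h2), h2,
    hur_add (hur_sub h3 (hur_of_ph (leech_ip hl h1))) (hur_mul (hur_of_ph hz) h2)⟩

theorem leech_zero : memLeech 0 := by
  have z2 : In2H 0 := ⟨0, hur_zero, by simp⟩
  have z3 : In2p2iH 0 := ⟨0, hur_zero, by simp⟩
  refine ⟨fun _ => hur_zero, ?_, ?_, ?_, ?_, ?_⟩
  · simpa using ph_zero
  · simpa using ph_zero
  · simpa using z2
  · simpa using z2
  · simpa using z3

theorem ph_of_Tlz_mem {lam : Fin 6 → Quat} {z : Quat}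
    (h : ∀ v, memLL v → memLL (Tlz lam z v)) : InPH (z - ipLeech lam lam / 2) := by
  have := (h (0, 1, 0) ⟨leech_zero, hur_one, hur_zero⟩).2.2
  have e : (Tlz lam z (0, 1, 0)).2.2 = (star qp)⁻¹ * (z - ipLeech lam lam / 2) := by
    simp [Tlz, ipLeech]
  rw [e] at this
  have e2 : z - ipLeech lam lam / 2 = star qp * ((star qp)⁻¹ * (z - ipLeech lam lam / 2)) := by
    rw [← mul_assoc, mul_inv_cancel₀ star_qp_ne, one_mul]
  rw [e2, star_qp_eq, mul_assoc]
  rw [star_qp_eq] at this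
  exact ⟨_, hur_mul hur_qi this, rfl⟩

theorem Tlz_neg_ph {lam : Fin 6 → Quat} {z : Quat} (hz : z.re = 0)
    (h : InPH (z - ipLeech lam lam / 2)) : InPH (-z - ipLeech (-lam) (-lam) / 2) := by
  have := ph_star h
  rw [star_sub, star_im hz, star_half, star_ipLeech] at this
  simpa [ipLeech_neg_left, ipLeech_neg_right] using this

theorem Tlz_neg_Tlz (lam : Fin 6 → Quat) (z : Quat) (v : VL) :
    Tlz (-lam) (-z) (Tlz lam z v) = v := by
  obtain ⟨m, μ, ν⟩ := v
  simp only [Tlz, Prod.mk.injEq, true_and]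
  constructor
  · ext1 s; simp [rmulLam]
  · rw [ipLeech_add_right, ipLeech_rmul]
    simp only [ipLeech_neg_left, ipLeech_neg_right, neg_neg]
    have h := half_add_half (ipLeech lam lam)
    set A := ipLeech lam lam / 2
    rw [← h]
    noncomm_ring

/-- `T_{λ,z}` as a permutation. -/
def TlzPerm (lam : Fin 6 → Quat) (z : Quat) : Equiv.Perm VL where
  toFun := Tlz lam z
  invFun := Tlz (-lam) (-z)
  left_inv := Tlz_neg_Tlz lam z
  right_inv v := by simpa using Tlz_neg_Tlz (-lam) (-z) v

/-- Roots of `L` of the form `(λ; 1, ν)`. -/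
def Root1 (y : VL) : Prop := memLL y ∧ ipLL y y = -2 ∧ y.2.1 = 1

theorem ipLL_one (m : Fin 6 → Quat) (ν : Quat) :
    ipLL (m, 1, ν) (m, 1, ν) = ipLeech m m + star qp * ν + star (star qp * ν) := by
  simp [ipLL]

theorem Tlz_root {lam : Fin 6 → Quat} (hl : memLeech lam) {z : Quat} (hz : z.re = 0)
    (h : InPH (z - ipLeech lam lam / 2)) {y : VL} (hy : Root1 y) : Root1 (Tlz lam z y) := by
  obtain ⟨h1, h2, h3⟩ := hy
  refine ⟨Tlz_mem hl h y h1, ?_, h3⟩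
  obtain ⟨m, μ, ν⟩ := y
  simp only at h3
  subst h3
  rw [← h2]
  have e1 : rmulLam lam 1 = lam := by ext1 s; simp [rmulLam]
  simp only [Tlz, e1]
  rw [ipLL_one, ipLL_one]
  have e2 : star qp * (ν - (star qp)⁻¹ * ipLeech lam m +
      (star qp)⁻¹ * (z - ipLeech lam lam / 2) * 1) =
      star qp * ν - ipLeech lam m + (z - ipLeech lam lam / 2) := by
    rw [mul_one, mul_add, mul_sub, ← mul_assoc, ← mul_assoc, mul_inv_cancel₀ star_qp_ne,
      one_mul, one_mul]
  rw [e2, star_add, star_sub, star_sub, star_im hz, star_half, star_ipLeech, star_ipLeech,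
    ipLeech_add_left, ipLeech_add_right, ipLeech_add_right]
  have h := half_add_half (ipLeech lam lam)
  set A := ipLeech lam lam / 2
  rw [← h]
  abel

theorem baseRoot_root : Root1 baseRoot := by
  refine ⟨⟨leech_zero, hur_one, hur_neg hur_one⟩, ?_, rfl⟩
  rw [baseRoot, ipLL_one]
  have : ipLeech 0 0 = 0 := by simp [ipLeech]
  rw [this]
  ext <;> simp <;> norm_num

theorem heis_root {g : Equiv.Perm VL} (hg : g ∈ Heis) : ∀ y, Root1 y ↔ Root1 (g y) := by
  induction hg using Subgroup.closure_induction with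
  | mem g hg =>
    obtain ⟨lam, z, hl, hz, hm, hgv⟩ := hg
    have hp := ph_of_Tlz_mem hm
    intro y
    rw [hgv]
    refine ⟨Tlz_root hl hz hp, fun hy => ?_⟩
    have := Tlz_root (leech_neg hl) (z := -z) (by simp [hz]) (Tlz_neg_ph hz hp) hy
    rwa [Tlz_neg_Tlz] at this
  | one => intro y; rfl
  | mul a b _ _ ha hb => intro y; rw [hb y, ha (b y)]; rfl
  | inv a _ ha => intro y; rw [ha (a⁻¹ y)]; simp

/-- The orbit of `(0; 1, −1)` under the Heisenberg group `𝕋` is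
exactly the set of roots of `L` of the form `(λ; 1, ν)`. -/
theorem Heisenberg_orbit_of_base_root :
    (∀ y : VL, memLL y → ipLL y y = -2 → y.2.1 = 1 → ∃ g ∈ Heis, g baseRoot = y) ∧
    (∀ g, g ∈ Heis → memLL (g baseRoot) ∧
      ipLL (g baseRoot) (g baseRoot) = -2 ∧ (g baseRoot).2.1 = 1) := by
  refine ⟨fun y hy hr h1 => ?_, fun g hg => (heis_root hg baseRoot).1 baseRoot_root⟩
  obtain ⟨m, μ, ν⟩ := y
  simp only at h1
  subst h1
  have hz : (star qp * (ν + 1) + ipLeech m m / 2).re = 0 := by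
    have hs : star (star qp * (ν + 1) + ipLeech m m / 2) =
        -(star qp * (ν + 1) + ipLeech m m / 2) := by
      rw [ipLL_one] at hr
      have h := half_add_half (ipLeech m m)
      rw [star_add, star_half, star_ipLeech, mul_add, star_add]
      set A := ipLeech m m / 2
      rw [← h] at hr
      have hq : star qp * 1 + star (star qp * 1) = 2 := by
        ext <;> simp <;> norm_num
      rw [eq_neg_iff_add_eq_zero]
      calc _ = (A + A + star qp * ν + star (star qp * ν)) +
            (star qp * 1 + star (star qp * 1)) := by abel
        _ = 0 := by rw [hr, hq]; simp
    have := congrArg (fun q : Quat => q.re) hs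
    simp only [Quaternion.re_star, Quaternion.re_neg] at this
    linarith
  have hp : InPH ((star qp * (ν + 1) + ipLeech m m / 2) - ipLeech m m / 2) := by
    rw [add_sub_cancel_right, star_qp_eq, mul_assoc]
    exact ⟨_, hur_mul hur_qi (hur_add hy.2.2 hur_one), rfl⟩
  refine ⟨TlzPerm m (star qp * (ν + 1) + ipLeech m m / 2),
    Subgroup.subset_closure ⟨m, _, hy.1, hz, Tlz_mem hy.1 hp, fun _ => rfl⟩, ?_⟩
  change Tlz _ _ baseRoot = _
  have e1 : rmulLam m 1 = m := by ext1 s; simp [rmulLam]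
  have e2 : ipLeech m 0 = 0 := by simp [ipLeech]
  simp only [Tlz, baseRoot, e1, e2, add_sub_cancel_right, zero_add, mul_zero, mul_one, sub_zero]
  rw [← mul_assoc, inv_mul_cancel₀ star_qp_ne, one_mul]
  simp
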